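/- Let S be a set of variable assignments, x ∈ V, I a nonempty closed interval, and B a box assignment, and let S_∃ := {d : there exists r ∈ I with d[x↦r] ∈ S}. If there is no box assignment B'' ⊊ B[x↦I] with S ∩ B'' = S ∩ B[x↦I], then there is no box assignment B' ⊊ B with S_∃ ∩ B' = S_∃ ∩ B. (This is the existential-quantifier case in the proof that structural tight consistency implies tight consistency.) -/

import Mathlib

/-!
Tightness of a box `C` for `S` says that an interval `J` bounding the `v`-coordinate of every
point of `S ∩ C` bounds the `v`-coordinate of every point of `C`: otherwise cutting `C` with `J`
in direction `v` would give a strictly smaller box with the same `S`-points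
(`coord_mem_of_tight`).

Let `B'` be strictly smaller than `B` with the same points of `S_∃`, and choose `d ∈ B` and `v` with
`d v ∉ B' v`. For `s ∈ S ∩ B[x↦I]`, the assignment `s[x ↦ d x]` lies in `B` and in `S_∃` (with
witness `s x`), hence in `B'`. If `v ≠ x`, then `s v ∈ B' v` for all such `s`, so tightness of
`B[x↦I]` forces `d v ∈ B' v`, a contradiction. If `v = x`, then `d x ∈ B' x` as soon as one such
`s` exists, so `S ∩ B[x↦I]` is empty, and tightness with `J = ∅` makes `B[x↦I]` empty; but it
contains `d[x ↦ r]` for any `r ∈ I`.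
-/

open Set

/-- A closed real interval (possibly empty or unbounded): a closed, order-connected set. -/
def IsClosedInterval (s : Set ℝ) : Prop := IsClosed s ∧ s.OrdConnected

/-- The type of closed real intervals. -/
abbrev CInterval : Type := {s : Set ℝ // IsClosedInterval s}

/-- A box assignment: a function from the variables to closed real intervals. -/
structure Box (V : Type) where
  comp : V → CInterval

/-- The set of variable assignments represented by a box assignment. -/
def Box.pts {V : Type} (B : Box V) : Set (V → ℝ) := {d | ∀ v, d v ∈ (B.comp v).1}

/-- `B.upd x I` is the box assignment equal to `B` except that it assigns `I` to `x`. -/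
def Box.upd {V : Type} [DecidableEq V] (B : Box V) (x : V) (I : CInterval) : Box V :=
  ⟨Function.update B.comp x I⟩

/-- The smallest closed interval containing a set of reals. -/
def cIntHull (s : Set ℝ) : Set ℝ := ⋂₀ {t | IsClosedInterval t ∧ s ⊆ t}

theorem isClosedInterval_cIntHull (s : Set ℝ) : IsClosedInterval (cIntHull s) := by
  constructor
  · exact isClosed_sInter fun t ht => ht.1.1
  · constructor
    intro x hx y hy z hz
    rw [cIntHull, Set.mem_sInter] at *
    intro t ht
    exact ht.1.2.out (hx t ht) (hy t ht) hz

/-- The smallest box assignment containing a given set of variable assignments. -/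
noncomputable def canonBox {V : Type} (S : Set (V → ℝ)) : Box V :=
  ⟨fun v => ⟨cIntHull ((fun d => d v) '' S), isClosedInterval_cIntHull _⟩⟩

/-- The box union `B₁ ⊎ B₂`: the smallest box assignment containing both `B₁` and `B₂`. -/
noncomputable def boxUnion {V : Type} (B₁ B₂ : Box V) : Box V := canonBox (B₁.pts ∪ B₂.pts)

/-- Quantified constraints: atoms `f ≤ g`, `f < g`, `f ≥ g`, `f > g`, conjunction,
disjunction, and bounded quantifiers with closed-interval bounds (no negation). -/
inductive QC (V : Type) : Type where
  | le (f g : (V → ℝ) → ℝ)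
  | lt (f g : (V → ℝ) → ℝ)
  | ge (f g : (V → ℝ) → ℝ)
  | gt (f g : (V → ℝ) → ℝ)
  | conj (φ₁ φ₂ : QC V)
  | disj (φ₁ φ₂ : QC V)
  | exQ (x : V) (I : CInterval) (φ : QC V)
  | allQ (x : V) (I : CInterval) (φ : QC V)

/-- The semantics of a quantified constraint: the set of variable assignments making it true. -/
def QC.sem {V : Type} [DecidableEq V] : QC V → Set (V → ℝ)
  | .le f g => {d | f d ≤ g d}
  | .lt f g => {d | f d < g d}
  | .ge f g => {d | g d ≤ f d}
  | .gt f g => {d | g d < f d}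
  | .conj φ₁ φ₂ => φ₁.sem ∩ φ₂.sem
  | .disj φ₁ φ₂ => φ₁.sem ∪ φ₂.sem
  | .exQ x I φ => {d | ∃ r ∈ I.1, Function.update d x r ∈ φ.sem}
  | .allQ x I φ => {d | ∀ r ∈ I.1, Function.update d x r ∈ φ.sem}

/-- The opposite of a quantified constraint: negation pushed down to the atoms. -/
def QC.opp {V : Type} : QC V → QC V
  | .le f g => .gt f g
  | .lt f g => .ge f g
  | .ge f g => .lt f g
  | .gt f g => .le f g
  | .conj φ₁ φ₂ => .disj φ₁.opp φ₂.opp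
  | .disj φ₁ φ₂ => .conj φ₁.opp φ₂.opp
  | .exQ x I φ => .allQ x I φ.opp
  | .allQ x I φ => .exQ x I φ.opp

/-- Atomic constraints. -/
def QC.Atomic {V : Type} : QC V → Prop
  | .le _ _ => True
  | .lt _ _ => True
  | .ge _ _ => True
  | .gt _ _ => True
  | _ => False

/-- A narrowing operator on bounded constraints: contractant, sound, monotone, idempotent. -/
def IsNarrowing {V : Type} [DecidableEq V] (N : QC V × Box V → QC V × Box V) : Prop :=
  (∀ (φ : QC V) (B : Box V), ((N (φ, B)).2).pts ⊆ B.pts) ∧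
  (∀ (φ : QC V) (B : Box V),
    ((N (φ, B)).1).sem ∩ ((N (φ, B)).2).pts = φ.sem ∩ ((N (φ, B)).2).pts) ∧
  (∀ (φ : QC V) (B B' : Box V), B'.pts ⊆ B.pts → ((N (φ, B')).2).pts ⊆ ((N (φ, B)).2).pts) ∧
  (∀ (φ : QC V) (B : Box V), N (N (φ, B)) = N (φ, B))

/-- An outer narrowing operator removes only points outside the solution set. -/
def IsOuterNarrowing {V : Type} [DecidableEq V] (N : QC V × Box V → QC V × Box V) : Prop :=
  IsNarrowing N ∧ ∀ (φ : QC V) (B : Box V), B.pts ∩ φ.sem ⊆ ((N (φ, B)).2).pts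

/-- An inner narrowing operator removes only points inside the solution set. -/
def IsInnerNarrowing {V : Type} [DecidableEq V] (N : QC V × Box V → QC V × Box V) : Prop :=
  IsNarrowing N ∧ ∀ (φ : QC V) (B : Box V), B.pts \ φ.sem ⊆ ((N (φ, B)).2).pts

/-- A narrowing operator on atomic bounded constraints. -/
def IsAtomicNarrowing {V : Type} [DecidableEq V] (A : QC V × Box V → QC V × Box V) : Prop :=
  (∀ (φ : QC V) (B : Box V), φ.Atomic → ((A (φ, B)).1).Atomic) ∧
  (∀ (φ : QC V) (B : Box V), φ.Atomic → ((A (φ, B)).2).pts ⊆ B.pts) ∧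
  (∀ (φ : QC V) (B : Box V), φ.Atomic →
    ((A (φ, B)).1).sem ∩ ((A (φ, B)).2).pts = φ.sem ∩ ((A (φ, B)).2).pts) ∧
  (∀ (φ : QC V) (B B' : Box V), φ.Atomic → B'.pts ⊆ B.pts →
    ((A (φ, B')).2).pts ⊆ ((A (φ, B)).2).pts) ∧
  (∀ (φ : QC V) (B : Box V), φ.Atomic → A (A (φ, B)) = A (φ, B))

/-- An outer narrowing operator on atomic bounded constraints. -/
def IsAtomicOuterNarrowing {V : Type} [DecidableEq V] (A : QC V × Box V → QC V × Box V) : Prop :=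
  IsAtomicNarrowing A ∧
  ∀ (φ : QC V) (B : Box V), φ.Atomic → B.pts ∩ φ.sem ⊆ ((A (φ, B)).2).pts

/-- Finitely contracting: no infinite sequence of bounded constraints where each
constraint part is the output constraint and each bound is a strict subset of the
output bound of the previous application. -/
def FinitelyContracting {V : Type} (A : QC V × Box V → QC V × Box V) : Prop :=
  ¬ ∃ s : ℕ → QC V × Box V, ∀ k : ℕ,
      (s (k + 1)).1 = (A (s k)).1 ∧ (s (k + 1)).2.pts ⊂ ((A (s k)).2).pts

mutual
  /-- The pruning algorithm `N_A` lifted from an atomic narrowing operator `A`,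
  as a relation between inputs and outputs. -/
  inductive NRel {V : Type} [DecidableEq V] (A : QC V × Box V → QC V × Box V) :
      QC V × Box V → QC V × Box V → Prop where
    | atom {φ : QC V} {B : Box V} (h : φ.Atomic) : NRel A (φ, B) (A (φ, B))
    | conj {φ₁ φ₂ ψ₁ ψ₂ : QC V} {B B' : Box V} {n : ℕ} {c : ℕ → QC V × QC V × Box V}
        (h0 : c 0 = (φ₁, φ₂, B)) (hn : c n = (ψ₁, ψ₂, B'))
        (hstep : ∀ i : ℕ, i < n → ConjStep A (c i) (c (i + 1)))
        (hfix₁ : NRel A (ψ₁, B') (ψ₁, B'))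
        (hfix₂ : NRel A (ψ₂, B') (ψ₂, B')) :
        NRel A (QC.conj φ₁ φ₂, B) (QC.conj ψ₁ ψ₂, B')
    | disj {φ₁ φ₂ ψ₁ ψ₂ : QC V} {B B₁ B₂ : Box V}
        (h₁ : NRel A (φ₁, B) (ψ₁, B₁)) (h₂ : NRel A (φ₂, B) (ψ₂, B₂)) :
        NRel A (QC.disj φ₁ φ₂, B) (QC.disj ψ₁ ψ₂, boxUnion B₁ B₂)
    | exQ {x : V} {I : CInterval} {φ ψ : QC V} {B B' : Box V}
        (h : NRel A (φ, B.upd x I) (ψ, B')) :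
        NRel A (QC.exQ x I φ, B) (QC.exQ x (B'.comp x) ψ, B')
    | allQ {x : V} {I : CInterval} {φ ψ : QC V} {B B' : Box V}
        (h : NRel A (φ, B.upd x I) (ψ, B')) :
        NRel A (QC.allQ x I φ, B)
          (QC.allQ x I ψ, canonBox {d : V → ℝ | ∀ r ∈ I.1, Function.update d x r ∈ B'.pts})

  /-- One step of the fixpoint iteration in the conjunction case of `N_A`:
  prune one of the two conjuncts. -/
  inductive ConjStep {V : Type} [DecidableEq V] (A : QC V × Box V → QC V × Box V) :
      QC V × QC V × Box V → QC V × QC V × Box V → Prop where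
    | left {φ₁ φ₂ ψ₁ : QC V} {B B' : Box V} (h : NRel A (φ₁, B) (ψ₁, B')) :
        ConjStep A (φ₁, φ₂, B) (ψ₁, φ₂, B')
    | right {φ₁ φ₂ ψ₂ : QC V} {B B' : Box V} (h : NRel A (φ₂, B) (ψ₂, B')) :
        ConjStep A (φ₁, φ₂, B) (φ₁, ψ₂, B')
end

/-- The consistency property `C` on atomic constraints lifted to quantified constraints. -/
inductive Lift {V : Type} [DecidableEq V] (C : QC V → Box V → Prop) : QC V → Box V → Prop where
  | atom {φ : QC V} {B : Box V} (h : φ.Atomic) (hC : C φ B) : Lift C φ B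
  | conj {φ₁ φ₂ : QC V} {B : Box V} (h₁ : Lift C φ₁ B) (h₂ : Lift C φ₂ B) :
      Lift C (QC.conj φ₁ φ₂) B
  | disj {φ₁ φ₂ : QC V} {B B₁ B₂ : Box V} (hB : B.pts = (boxUnion B₁ B₂).pts)
      (h₁ : Lift C φ₁ B₁) (h₂ : Lift C φ₂ B₂) : Lift C (QC.disj φ₁ φ₂) B
  | exQ {x : V} {I : CInterval} {φ : QC V} {B : Box V} (h : Lift C φ (B.upd x I)) :
      Lift C (QC.exQ x I φ) B
  | allQ {x : V} {I : CInterval} {φ : QC V} {B : Box V} (h : Lift C φ (B.upd x I)) :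
      Lift C (QC.allQ x I φ) B

/-- The degree of truth of a quantified constraint, with values in the extended reals. -/
noncomputable def QC.deg {V : Type} [DecidableEq V] : QC V → (V → ℝ) → EReal
  | .le f g => fun d => ((g d - f d : ℝ) : EReal)
  | .lt f g => fun d => ((g d - f d : ℝ) : EReal)
  | .ge f g => fun d => ((f d - g d : ℝ) : EReal)
  | .gt f g => fun d => ((f d - g d : ℝ) : EReal)
  | .conj φ₁ φ₂ => fun d => min (φ₁.deg d) (φ₂.deg d)
  | .disj φ₁ φ₂ => fun d => max (φ₁.deg d) (φ₂.deg d)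
  | .exQ x I φ => fun d => ⨆ r ∈ I.1, φ.deg (Function.update d x r)
  | .allQ x I φ => fun d => ⨅ r ∈ I.1, φ.deg (Function.update d x r)

/-- A converging atomic (outer) narrowing operator. -/
def Converging {V : Type} [DecidableEq V] (A : QC V × Box V → QC V × Box V) : Prop :=
  ∀ φ : QC V, φ.Atomic → ∀ Bs : ℕ → Box V,
    (∀ i, (Bs (i + 1)).pts ⊆ (Bs i).pts) →
    ∀ d : V → ℝ, (⋂ i, (Bs i).pts) = {d} → φ.deg d < 0 →
    ∃ k, ∀ l, k ≤ l → ((A (φ, Bs l)).2).pts = ∅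

/-- One branching step: split a quantifier bound of some subconstraint. -/
inductive Branch {V : Type} : QC V → QC V → Prop where
  | allSplit {x : V} {I I₁ I₂ : CInterval} {φ : QC V} (h : I.1 = I₁.1 ∪ I₂.1) :
      Branch (QC.allQ x I φ) (QC.conj (QC.allQ x I₁ φ) (QC.allQ x I₂ φ))
  | exSplit {x : V} {I I₁ I₂ : CInterval} {φ : QC V} (h : I.1 = I₁.1 ∪ I₂.1) :
      Branch (QC.exQ x I φ) (QC.disj (QC.exQ x I₁ φ) (QC.exQ x I₂ φ))
  | conjL {φ₁ φ₁' φ₂ : QC V} (h : Branch φ₁ φ₁') : Branch (QC.conj φ₁ φ₂) (QC.conj φ₁' φ₂)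
  | conjR {φ₁ φ₂ φ₂' : QC V} (h : Branch φ₂ φ₂') : Branch (QC.conj φ₁ φ₂) (QC.conj φ₁ φ₂')
  | disjL {φ₁ φ₁' φ₂ : QC V} (h : Branch φ₁ φ₁') : Branch (QC.disj φ₁ φ₂) (QC.disj φ₁' φ₂)
  | disjR {φ₁ φ₂ φ₂' : QC V} (h : Branch φ₂ φ₂') : Branch (QC.disj φ₁ φ₂) (QC.disj φ₁ φ₂')
  | exCong {x : V} {I : CInterval} {φ φ' : QC V} (h : Branch φ φ') :
      Branch (QC.exQ x I φ) (QC.exQ x I φ')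
  | allCong {x : V} {I : CInterval} {φ φ' : QC V} (h : Branch φ φ') :
      Branch (QC.allQ x I φ) (QC.allQ x I φ')

/-- All quantification intervals of the constraint have diameter (length) at most `ε`. -/
def QC.smallQ {V : Type} (ε : ENNReal) : QC V → Prop
  | .conj φ₁ φ₂ => φ₁.smallQ ε ∧ φ₂.smallQ ε
  | .disj φ₁ φ₂ => φ₁.smallQ ε ∧ φ₂.smallQ ε
  | .exQ _ I φ => EMetric.diam I.1 ≤ ε ∧ φ.smallQ ε
  | .allQ _ I φ => EMetric.diam I.1 ≤ ε ∧ φ.smallQ ε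
  | _ => True

/-- The box assignment assigning all of ℝ to every variable. -/
def topBox (V : Type) : Box V :=
  ⟨fun _ => ⟨Set.univ, ⟨isClosed_univ, Set.ordConnected_univ⟩⟩⟩

theorem Box.mem_upd {V : Type} [DecidableEq V] {B : Box V} {x : V} {I : CInterval}
    {d : V → ℝ} : d ∈ (B.upd x I).pts ↔ d x ∈ I.1 ∧ ∀ v, v ≠ x → d v ∈ (B.comp v).1 := by
  constructor
  · intro h
    refine ⟨by simpa [Box.upd] using h x, fun v hv => ?_⟩
    simpa [Box.upd, hv] using h v
  · rintro ⟨h₁, h₂⟩ v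
    by_cases hv : v = x
    · subst hv
      simpa [Box.upd] using h₁
    · simpa [Box.upd, hv] using h₂ v hv

/-- If no strictly smaller box has the same `S`-points as `C`, then any closed interval containing
the `v`-coordinates of the points of `S ∩ C` contains the `v`-coordinates of all points of `C`. -/
theorem coord_mem_of_tight {V : Type} [DecidableEq V] {S : Set (V → ℝ)} {C : Box V}
    (h : ¬ ∃ C' : Box V, C'.pts ⊂ C.pts ∧ S ∩ C'.pts = S ∩ C.pts) (v : V) (J : CInterval)
    (hJ : ∀ s ∈ S, s ∈ C.pts → s v ∈ J.1) {d : V → ℝ} (hd : d ∈ C.pts) : d v ∈ J.1 := by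
  by_contra hdJ
  let K : CInterval := ⟨(C.comp v).1 ∩ J.1,
    (C.comp v).2.1.inter J.2.1, (C.comp v).2.2.inter J.2.2⟩
  have hK : ∀ e : V → ℝ, e ∈ (C.upd v K).pts ↔ e ∈ C.pts ∧ e v ∈ J.1 := by
    intro e
    rw [Box.mem_upd]
    constructor
    · rintro ⟨⟨h₁, h₂⟩, h₃⟩
      refine ⟨fun w => ?_, h₂⟩
      by_cases hw : w = v
      · exact hw ▸ h₁
      · exact h₃ w hw
    · rintro ⟨h₁, h₂⟩
      exact ⟨⟨h₁ v, h₂⟩, fun w _ => h₁ w⟩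
  refine h ⟨C.upd v K, ⟨fun e he => ((hK e).1 he).1, fun hsub => ?_⟩, ?_⟩
  · exact hdJ ((hK d).1 (hsub hd)).2
  · ext s
    simp only [mem_inter_iff, hK]
    exact ⟨fun hs => ⟨hs.1, hs.2.1⟩, fun hs => ⟨hs.1, hs.2, hJ s hs.1 hs.2⟩⟩

theorem tight_exists {V : Type} [DecidableEq V] (S : Set (V → ℝ)) (x : V)
    (I : CInterval) (hI : I.1.Nonempty) (B : Box V)
    (h : ¬ ∃ B'' : Box V, B''.pts ⊂ (B.upd x I).pts ∧
      S ∩ B''.pts = S ∩ (B.upd x I).pts) :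
    ¬ ∃ B' : Box V, B'.pts ⊂ B.pts ∧
      {d : V → ℝ | ∃ r ∈ I.1, Function.update d x r ∈ S} ∩ B'.pts =
        {d : V → ℝ | ∃ r ∈ I.1, Function.update d x r ∈ S} ∩ B.pts := by
  rintro ⟨B', hB', hS⟩
  obtain ⟨d, hd, hd'⟩ := Set.exists_of_ssubset hB'
  obtain ⟨v, hv⟩ : ∃ v, d v ∉ (B'.comp v).1 := by
    by_contra! hall
    exact hd' hall
  obtain ⟨r, hr⟩ := hI
  have hmem : Function.update d x r ∈ (B.upd x I).pts :=
    Box.mem_upd.2 ⟨by simpa using hr, fun w hw => by simpa [hw] using hd w⟩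
  have key : ∀ s ∈ S, s ∈ (B.upd x I).pts → Function.update s x (d x) ∈ B'.pts := by
    intro s hs hsB
    obtain ⟨h₁, h₂⟩ := Box.mem_upd.1 hsB
    refine (hS.symm.subset ⟨⟨s x, h₁, by simpa using hs⟩, fun w => ?_⟩).2
    by_cases hw : w = x
    · subst hw
      simpa using hd w
    · simpa [hw] using h₂ w hw
  by_cases hvx : v = x
  · subst hvx
    exact coord_mem_of_tight h v ⟨∅, isClosed_empty, ordConnected_empty⟩
      (fun s hs hsB => hv (by simpa using key s hs hsB v)) hmem
  · have := coord_mem_of_tight h v (B'.comp v)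
      (fun s hs hsB => by simpa [hvx] using key s hs hsB v) hmem
    exact hv (by simpa [hvx] using this)
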